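/- Let $Q_1 = \frac{1}{\sqrt{M}}(1,\dots,1)^{\intercal} \in \mathbb{R}^M$ and let $Q_2 \in \mathbb{R}^{M\times(M-1)}$ be any matrix whose columns form an orthonormal basis of the orthogonal complement of $Q_1$. Under the stability conditions $\kappa_1 > 0$, $\kappa_1 + 4\kappa_2 > 0$, for each $\xi \in (0, 2\pi)$ the matrix $Q_2^{\intercal}\widehat{\mathcal{A}}(\xi)Q_2$ is invertible and $(Q_2^{\intercal}\widehat{\mathcal{A}}Q_2)^{-1} = Q_2^{\intercal}\widehat{\mathcal{A}}^{-1}Q_2 - Q_2^{\intercal}\widehat{\mathcal{A}}^{-1}Q_1(Q_1^{\intercal}\widehat{\mathcal{A}}^{-1}Q_1)^{-1}Q_1^{\intercal}\widehat{\mathcal{A}}^{-1}Q_2$. -/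

import Mathlib

open Matrix Complex Real

noncomputable def A0 (M : ℕ) (κ1 κ2 : ℝ) : Matrix (Fin M) (Fin M) ℂ := fun i j =>
  if (i : ℤ) = (j : ℤ) then 2 * ((κ1 : ℂ) + κ2)
  else if |(i : ℤ) - (j : ℤ)| = 1 then -(κ1 : ℂ)
  else if |(i : ℤ) - (j : ℤ)| = 2 then -(κ2 : ℂ) else 0

noncomputable def A1 (M : ℕ) (κ1 κ2 : ℝ) : Matrix (Fin M) (Fin M) ℂ := fun i j =>
  if (i : ℕ) = 0 ∧ (j : ℕ) = M - 1 then -(κ1 : ℂ)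
  else if ((i : ℕ) = 0 ∧ (j : ℕ) = M - 2) ∨ ((i : ℕ) = 1 ∧ (j : ℕ) = M - 1) then -(κ2 : ℂ)
  else 0

noncomputable def Ahat (M : ℕ) (κ1 κ2 ξ : ℝ) : Matrix (Fin M) (Fin M) ℂ :=
  A0 M κ1 κ2 + Complex.exp (-(ξ : ℂ) * Complex.I) • A1 M κ1 κ2
    + Complex.exp ((ξ : ℂ) * Complex.I) • (A1 M κ1 κ2)ᵀ

noncomputable def q1 (M : ℕ) : Fin M → ℂ := fun _ => (1 / Real.sqrt M : ℝ)

noncomputable def q1r (M : ℕ) : Fin M → ℝ := fun _ => 1 / Real.sqrt M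

noncomputable def q1col (M : ℕ) : Matrix (Fin M) (Fin 1) ℂ := fun _ _ => (1 / Real.sqrt M : ℝ)

/-!
With `S` the shift on `ℂᴹ` that picks up the Bloch phase `c = e^{iξ}` on wrapping around, the
Toeplitz bands `A0` and `A1` combine to `Â(ξ) = κ₁ Δ(S) + κ₂ Δ(S²)`, where `Δ(u) = 2 - u - u*`.
Since `Sᴹ = c`, the matrix `S` is unitary (`S* = c⁻¹ S^(M-1)`), and `1 - S`, a factor of `1 - Sᴹ`,
is invertible as soon as `c ≠ 1`; then `Δ(S) = (1 - S)*(1 - S)` is positive definite. If `κ₂ ≥ 0`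
this already makes `Â(ξ)` positive definite, and if `κ₂ < 0` one uses `Δ(S²) = 4 Δ(S) - Δ(S)²`.

For the inverse, `Q₂Q₂ᵀ = 1 - Q₁Q₁ᵀ` gives
`(Q₂ᵀÂQ₂)(Q₂ᵀÂ⁻¹X) = Q₂ᵀX - Q₂ᵀÂQ₁ (Q₁ᵀÂ⁻¹X)`; taking `X = Q₂` and `X = Q₁` and eliminating
`Q₂ᵀÂQ₁` shows that the claimed expression is an inverse.
-/

section Compression

variable {m n k : Type*} [Fintype m] [Fintype n] [Fintype k] [DecidableEq m]

theorem compression_mul {R l : Type*} [Ring R] {A B : Matrix m m R} {P : Matrix n m R}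
    {Q : Matrix m n R} {p : Matrix k m R} {q : Matrix m k R} (hAB : A * B = 1)
    (hQP : Q * P + q * p = 1) (X : Matrix m l R) :
    P * A * Q * (P * B * X) = P * X - P * A * q * (p * B * X) := calc
  _ = P * A * (Q * P) * (B * X) := by simp only [Matrix.mul_assoc]
  _ = P * (A * B) * X - P * A * q * (p * B * X) := by
    simp only [eq_sub_of_add_eq hQP, Matrix.mul_sub, Matrix.sub_mul, Matrix.mul_one,
      Matrix.mul_assoc]
  _ = _ := by rw [hAB, Matrix.mul_one]

variable [DecidableEq n] [DecidableEq k]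

theorem isUnit_compression_and_inv_eq {R : Type*} [CommRing R] {A : Matrix m m R}
    {P : Matrix n m R} {Q : Matrix m n R} {p : Matrix k m R} {q : Matrix m k R}
    (hA : IsUnit A) (hs : IsUnit (p * A⁻¹ * q)) (hPQ : P * Q = 1) (hQP : Q * P + q * p = 1) :
    IsUnit (P * A * Q) ∧
      (P * A * Q)⁻¹ =
        P * A⁻¹ * Q - P * A⁻¹ * q * (p * A⁻¹ * q)⁻¹ * (p * A⁻¹ * Q) := by
  rw [isUnit_iff_isUnit_det] at hA hs
  have hAA := mul_nonsing_inv A hA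
  have hss := mul_nonsing_inv _ hs
  set s := (p * A⁻¹ * q)⁻¹
  have hPqp : P * q * p = 0 := calc
    P * q * p = P * (Q * P + q * p) - P * Q * P := by
      simp only [Matrix.mul_add, Matrix.mul_assoc, add_sub_cancel_left]
    _ = 0 := by rw [hQP, hPQ, Matrix.mul_one, Matrix.one_mul, sub_self]
  have hPq : P * q = 0 := calc
    P * q = P * q * (p * A⁻¹ * q * s) := by rw [hss, Matrix.mul_one]
    _ = P * q * p * (A⁻¹ * q * s) := by simp only [Matrix.mul_assoc]
    _ = 0 := by rw [hPqp, Matrix.zero_mul]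
  have hinv : P * A * Q * (P * A⁻¹ * Q - P * A⁻¹ * q * s * (p * A⁻¹ * Q)) = 1 := calc
    _ = P * A * Q * (P * A⁻¹ * Q) - P * A * Q * (P * A⁻¹ * q) * (s * (p * A⁻¹ * Q)) := by
      simp only [Matrix.mul_sub, Matrix.mul_assoc]
    _ = 1 - P * A * q * (p * A⁻¹ * Q)
          + P * A * q * (p * A⁻¹ * q * s) * (p * A⁻¹ * Q) := by
      rw [compression_mul hAA hQP, compression_mul hAA hQP, hPQ, hPq, zero_sub,
        Matrix.neg_mul, sub_neg_eq_add]
      simp only [Matrix.mul_assoc]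
    _ = 1 := by rw [hss, Matrix.mul_one, sub_add_cancel]
  exact ⟨IsUnit.of_mul_eq_one _ hinv, inv_eq_right_inv hinv⟩

open scoped ComplexOrder in
theorem posDef_isUnit_compression_and_inv_eq {𝕜 : Type*} [RCLike 𝕜] {A : Matrix m m 𝕜}
    {Q : Matrix m n 𝕜} {q : Matrix m k 𝕜} (hA : A.PosDef) (hQ : Qᴴ * Q = 1) (hq : qᴴ * q = 1)
    (hQq : Q * Qᴴ + q * qᴴ = 1) :
    IsUnit (Qᴴ * A * Q) ∧
      (Qᴴ * A * Q)⁻¹ =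
        Qᴴ * A⁻¹ * Q - Qᴴ * A⁻¹ * q * (qᴴ * A⁻¹ * q)⁻¹ * (qᴴ * A⁻¹ * Q) := by
  have hq_inj : Function.Injective q.mulVec :=
    Function.LeftInverse.injective (g := qᴴ.mulVec) fun x => by
      rw [mulVec_mulVec, hq, one_mulVec]
  exact isUnit_compression_and_inv_eq hA.isUnit
    (hA.inv.conjTranspose_mul_mul_same hq_inj).isUnit hQ hQq

theorem map_ofReal_mul {m n k : Type*} [Fintype n] (A : Matrix m n ℝ) (B : Matrix n k ℝ) :
    (A * B).map ofReal = A.map ofReal * B.map ofReal :=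
  Matrix.map_mul (f := ofRealHom)

theorem conjTranspose_map_ofReal {m n : Type*} (A : Matrix m n ℝ) :
    (A.map ofReal)ᴴ = Aᵀ.map ofReal := by
  ext i j
  exact conj_ofReal _

open scoped ComplexOrder in
theorem posDef_isUnit_compression_and_inv_eq_of_real {A : Matrix m m ℂ} {Q : Matrix m n ℝ}
    {q : Matrix m k ℝ} (hA : A.PosDef) (hQ : Qᵀ * Q = 1) (hq : qᵀ * q = 1)
    (hQq : Q * Qᵀ + q * qᵀ = 1) :
    IsUnit ((Q.map ofReal)ᵀ * A * Q.map ofReal) ∧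
      ((Q.map ofReal)ᵀ * A * Q.map ofReal)⁻¹ =
        (Q.map ofReal)ᵀ * A⁻¹ * Q.map ofReal -
          (Q.map ofReal)ᵀ * A⁻¹ * q.map ofReal * ((q.map ofReal)ᵀ * A⁻¹ * q.map ofReal)⁻¹ *
            ((q.map ofReal)ᵀ * A⁻¹ * Q.map ofReal) := by
  simp only [← transpose_map, ← conjTranspose_map_ofReal]
  refine posDef_isUnit_compression_and_inv_eq hA ?_ ?_ ?_
  · rw [conjTranspose_map_ofReal, ← map_ofReal_mul, hQ, Matrix.map_one _ ofReal_zero ofReal_one]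
  · rw [conjTranspose_map_ofReal, ← map_ofReal_mul, hq, Matrix.map_one _ ofReal_zero ofReal_one]
  · rw [conjTranspose_map_ofReal, conjTranspose_map_ofReal, ← map_ofReal_mul, ← map_ofReal_mul,
      ← Matrix.map_add _ ofReal_add, hQq, Matrix.map_one _ ofReal_zero ofReal_one]

end Compression

section UnitaryLaplacian

/-- The element `2 - u - u*`, the discrete Laplacian attached to a unitary `u`: on the spectrum it
is `e^{iθ} ↦ 2 - 2 cos θ`. -/
def unitaryLaplacian {A : Type*} [Ring A] [StarRing A] (u : A) : A := 2 - u - star u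

theorem unitaryLaplacian_eq_star_mul_self {A : Type*} [Ring A] [StarRing A] {u : A}
    (hu : u ∈ unitary A) : unitaryLaplacian u = star (1 - u) * (1 - u) := by
  have huu := Unitary.star_mul_self_of_mem hu
  rw [unitaryLaplacian, star_sub, star_one, sub_mul, one_mul, mul_sub, mul_one, huu,
    ← one_add_one_eq_two]
  abel

theorem unitaryLaplacian_sq {A : Type*} [Ring A] [StarRing A] {u : A} (hu : u ∈ unitary A) :
    unitaryLaplacian (u ^ 2) = 4 • unitaryLaplacian u - unitaryLaplacian u ^ 2 := by
  have huu := Unitary.star_mul_self_of_mem hu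
  have huu' := Unitary.mul_star_self_of_mem hu
  have expand : unitaryLaplacian u ^ 2 =
      4 • 1 - 4 • u - 4 • star u + u ^ 2 + star u ^ 2 + u * star u + star u * u := by
    rw [unitaryLaplacian, ← one_add_one_eq_two]
    noncomm_ring
  rw [expand, huu, huu', unitaryLaplacian, unitaryLaplacian, star_pow, ← one_add_one_eq_two]
  noncomm_ring

theorem isUnit_one_sub_of_isUnit_one_sub_pow {R : Type*} [Ring R] {x : R} {n : ℕ}
    (h : IsUnit (1 - x ^ n)) : IsUnit (1 - x) := by
  have hcomm : Commute (1 - x) (∑ i ∈ Finset.range n, x ^ i) :=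
    (mul_neg_geom_sum x n).trans (geom_sum_mul_neg x n).symm
  exact (hcomm.isUnit_mul_iff.1 (mul_neg_geom_sum x n ▸ h)).1

open scoped ComplexOrder

variable {n 𝕜 : Type*} [Fintype n] [DecidableEq n] [RCLike 𝕜] {U : Matrix n n 𝕜}

theorem posSemidef_unitaryLaplacian (hU : U ∈ unitaryGroup n 𝕜) :
    (unitaryLaplacian U).PosSemidef :=
  unitaryLaplacian_eq_star_mul_self hU ▸ posSemidef_conjTranspose_mul_self (1 - U)

theorem posDef_unitaryLaplacian (hU : U ∈ unitaryGroup n 𝕜) (hU1 : IsUnit (1 - U)) :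
    (unitaryLaplacian U).PosDef :=
  unitaryLaplacian_eq_star_mul_self hU ▸
    PosDef.conjTranspose_mul_self (1 - U) (mulVec_injective_of_isUnit hU1)

theorem posDef_smul_unitaryLaplacian_add_smul_unitaryLaplacian_sq (hU : U ∈ unitaryGroup n 𝕜)
    (hU1 : IsUnit (1 - U)) {κ1 κ2 : ℝ} (h1 : 0 < κ1) (h2 : 0 < κ1 + 4 * κ2) :
    (κ1 • unitaryLaplacian U + κ2 • unitaryLaplacian (U ^ 2)).PosDef := by
  have hL := posDef_unitaryLaplacian hU hU1
  rcases le_total 0 κ2 with hκ | hκ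
  · exact (hL.smul h1).add_posSemidef ((posSemidef_unitaryLaplacian (pow_mem hU 2)).smul hκ)
  · have regroup : κ1 • unitaryLaplacian U + κ2 • unitaryLaplacian (U ^ 2) =
        (κ1 + 4 * κ2) • unitaryLaplacian U + (-κ2) • unitaryLaplacian U ^ 2 := by
      rw [unitaryLaplacian_sq hU]
      module
    rw [regroup]
    exact (hL.smul h2).add_posSemidef ((hL.posSemidef.pow 2).smul (neg_nonneg.2 hκ))

end UnitaryLaplacian

section TwistedShift

variable {R : Type*} {M : ℕ}

/-- The `M × M` matrix with ones on the `d`-th diagonal (`d > 0` above, `d < 0` below the main one)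
and zeros elsewhere. -/
def truncatedShift (R : Type*) [Zero R] [One R] (M : ℕ) (d : ℤ) : Matrix (Fin M) (Fin M) R :=
  of fun i j => if (j : ℤ) = i + d then 1 else 0

theorem truncatedShift_apply [Zero R] [One R] (d : ℤ) (i j : Fin M) :
    truncatedShift R M d i j = if (j : ℤ) = i + d then 1 else 0 :=
  rfl

theorem truncatedShift_zero [Zero R] [One R] : truncatedShift R M 0 = 1 := by
  ext i j
  simp only [truncatedShift_apply, add_zero, Nat.cast_inj, Fin.val_inj, one_apply, eq_comm]

theorem truncatedShift_eq_zero [Zero R] [One R] {d : ℤ} (hd : M ≤ |d|) :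
    truncatedShift R M d = 0 := by
  ext i j
  rw [truncatedShift_apply, if_neg (by grind), Matrix.zero_apply]

theorem transpose_truncatedShift [Zero R] [One R] (d : ℤ) :
    (truncatedShift R M d)ᵀ = truncatedShift R M (-d) := by
  ext i j
  simp only [transpose_apply, truncatedShift_apply, eq_add_neg_iff_add_eq, eq_comm]

theorem conjTranspose_truncatedShift [Semiring R] [StarRing R] (d : ℤ) :
    (truncatedShift R M d)ᴴ = truncatedShift R M (-d) := by
  rw [← transpose_truncatedShift]
  ext i j
  simp only [conjTranspose_apply, transpose_apply, truncatedShift_apply, apply_ite star, star_one,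
    star_zero]

theorem truncatedShift_mul_apply [Semiring R] (d e : ℤ) (i j : Fin M) :
    (truncatedShift R M d * truncatedShift R M e) i j =
      if 0 ≤ i + d ∧ i + d < M ∧ (j : ℤ) = i + d + e then 1 else 0 := by
  simp only [mul_apply, truncatedShift_apply, ite_mul, one_mul, zero_mul, ← ite_and]
  split_ifs with h
  · rw [Finset.sum_eq_single ⟨(i + d).toNat, by lia⟩]
    · grind
    · grind
    · simp
  · exact Finset.sum_eq_zero fun k _ => if_neg (by have := k.isLt; lia)

variable [CommSemiring R]

/-- The shift `(S v)ᵢ = vᵢ₊₁` on `Rᴹ` under the quasi-periodic convention `vᵢ₊ₘ = c vᵢ`. -/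
def twistedShift (M : ℕ) (c : R) : Matrix (Fin M) (Fin M) R :=
  truncatedShift R M 1 + c • truncatedShift R M (1 - M)

theorem twistedShift_pow (c : R) {k : ℕ} (hk : k ≤ M) :
    twistedShift M c ^ k = truncatedShift R M k + c • truncatedShift R M (k - M) := by
  induction k with
  | zero => simp [truncatedShift_zero, truncatedShift_eq_zero]
  | succ k ih =>
    rw [pow_succ', ih (by lia), twistedShift]
    have no_wrap : truncatedShift R M (1 : ℤ) * truncatedShift R M k =
        truncatedShift R M (k + 1 : ℕ) := by
      ext i j
      rw [truncatedShift_mul_apply, truncatedShift_apply]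
      exact if_congr (by have := j.isLt; lia) rfl rfl
    have wrap_once : truncatedShift R M 1 * truncatedShift R M (k - M) +
        truncatedShift R M (1 - M) * truncatedShift R M k =
          truncatedShift R M ((k + 1 : ℕ) - M) := by
      ext i j
      simp only [Matrix.add_apply, truncatedShift_mul_apply, truncatedShift_apply]
      have := i.isLt
      have := j.isLt
      split_ifs <;> first | lia | simp only [add_zero, zero_add]
    have wrap_twice : truncatedShift R M (1 - M) * truncatedShift R M (k - M) = 0 := by
      ext i j
      rw [truncatedShift_mul_apply, if_neg (by have := i.isLt; lia), Matrix.zero_apply]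
    rw [add_mul, mul_add, mul_add, smul_mul_smul_comm, wrap_twice, no_wrap, ← wrap_once,
      mul_smul_comm, smul_mul_assoc]
    module

theorem twistedShift_pow_self (c : R) : twistedShift M c ^ M = c • 1 := by
  rw [twistedShift_pow c le_rfl, truncatedShift_eq_zero (by simp), sub_self, truncatedShift_zero,
    zero_add]

theorem isUnit_one_sub_twistedShift {R : Type*} [CommRing R] {c : R} (hc : IsUnit (1 - c)) :
    IsUnit (1 - twistedShift M c) := by
  refine isUnit_one_sub_of_isUnit_one_sub_pow (n := M) ?_
  have : (1 - c • 1 : Matrix (Fin M) (Fin M) R) = algebraMap R _ (1 - c) := by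
    rw [map_sub, map_one, Algebra.algebraMap_eq_smul_one]
  rw [twistedShift_pow_self, this]
  exact hc.map _

theorem conjTranspose_twistedShift [StarRing R] (c : R) :
    (twistedShift M c)ᴴ = truncatedShift R M (-1) + star c • truncatedShift R M (M - 1) := by
  rw [twistedShift, conjTranspose_add, conjTranspose_smul, conjTranspose_truncatedShift,
    conjTranspose_truncatedShift, neg_sub]

theorem twistedShift_mem_unitaryGroup {R : Type*} [CommRing R] [StarRing R] {c : R}
    (hc : c ∈ unitary R) :
    twistedShift M c ∈ unitaryGroup (Fin M) R := by
  rcases M.eq_zero_or_pos with rfl | hM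
  · rw [Subsingleton.elim (twistedShift 0 c) 1]
    exact one_mem _
  have hcc : star c * c = 1 := Unitary.star_mul_self_of_mem hc
  have conjTranspose_eq : (twistedShift M c)ᴴ = star c • twistedShift M c ^ (M - 1) := by
    rw [twistedShift_pow c (M.sub_le 1), conjTranspose_twistedShift, smul_add, smul_smul, hcc,
      one_smul, add_comm, Nat.cast_pred hM, sub_sub_cancel_left]
  rw [mem_unitaryGroup_iff, star_eq_conjTranspose, conjTranspose_eq, mul_smul_comm,
    mul_pow_sub_one hM.ne', twistedShift_pow_self, smul_smul, hcc, one_smul]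

end TwistedShift

section BlochMatrix

variable {M : ℕ}

theorem A0_eq_truncatedShift (κ1 κ2 : ℝ) :
    A0 M κ1 κ2 = (2 * (κ1 + κ2)) • 1
      - κ1 • (truncatedShift ℂ M 1 + truncatedShift ℂ M (-1))
      - κ2 • (truncatedShift ℂ M 2 + truncatedShift ℂ M (-2)) := by
  ext i j
  simp only [A0, Matrix.sub_apply, Matrix.add_apply, Matrix.smul_apply, one_apply,
    truncatedShift_apply, Fin.ext_iff, real_smul, ofReal_mul, ofReal_add, ofReal_ofNat]
  grind

theorem A1_eq_truncatedShift (hM : 2 ≤ M) (κ1 κ2 : ℝ) :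
    A1 M κ1 κ2 = -κ1 • truncatedShift ℂ M (M - 1) - κ2 • truncatedShift ℂ M (M - 2) := by
  ext i j
  simp only [A1, Matrix.sub_apply, Matrix.smul_apply, truncatedShift_apply, real_smul, ofReal_neg]
  grind

theorem star_exp_ofReal_mul_I (ξ : ℝ) : star (cexp (ξ * I)) = cexp (-ξ * I) := by
  rw [star_def, ← exp_conj, map_mul, conj_ofReal, conj_I, mul_neg, neg_mul]

theorem Ahat_eq_unitaryLaplacian (hM : 2 ≤ M) (κ1 κ2 ξ : ℝ) :
    Ahat M κ1 κ2 ξ = κ1 • unitaryLaplacian (twistedShift M (cexp (ξ * I)))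
      + κ2 • unitaryLaplacian (twistedShift M (cexp (ξ * I)) ^ 2) := by
  rw [Ahat, A0_eq_truncatedShift, A1_eq_truncatedShift hM, ← star_exp_ofReal_mul_I,
    twistedShift_pow _ hM, twistedShift]
  simp only [unitaryLaplacian, star_eq_conjTranspose, conjTranspose_add, conjTranspose_smul,
    conjTranspose_truncatedShift, transpose_sub, transpose_smul, transpose_truncatedShift, neg_sub,
    Nat.cast_ofNat, ← one_add_one_eq_two (R := Matrix _ _ ℂ)]
  module

open scoped ComplexOrder in
theorem posDef_Ahat (hM : 2 ≤ M) {κ1 κ2 : ℝ} (h1 : 0 < κ1) (h2 : 0 < κ1 + 4 * κ2) {ξ : ℝ}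
    (hξ : cexp (ξ * I) ≠ 1) : (Ahat M κ1 κ2 ξ).PosDef := by
  have hc : cexp (ξ * I) ∈ unitary ℂ := by
    rw [Unitary.mem_iff_star_mul_self, star_exp_ofReal_mul_I, ← Complex.exp_add, neg_mul,
      neg_add_cancel, Complex.exp_zero]
  rw [Ahat_eq_unitaryLaplacian hM]
  exact posDef_smul_unitaryLaplacian_add_smul_unitaryLaplacian_sq
    (twistedShift_mem_unitaryGroup hc)
    (isUnit_one_sub_twistedShift (sub_ne_zero.2 hξ.symm).isUnit) h1 h2

theorem exp_mul_I_ne_one_of_mem_Ioo {ξ : ℝ} (hξ : ξ ∈ Set.Ioo 0 (2 * π)) :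
    cexp (ξ * I) ≠ 1 := by
  intro h
  have hcos : Real.cos ξ = 1 := by rw [← exp_ofReal_mul_I_re, h, one_re]
  exact hξ.1.ne' <| (Real.cos_eq_one_iff_of_lt_of_lt
    (by linarith [hξ.1, Real.two_pi_pos]) hξ.2).1 hcos

end BlochMatrix

theorem q1r_dotProduct_self {M : ℕ} (hM : M ≠ 0) : q1r M ⬝ᵥ q1r M = 1 := by
  have hM' : (M : ℝ) ≠ 0 := Nat.cast_ne_zero.2 hM
  simp [q1r, dotProduct, ← mul_inv, hM']

theorem schur_inverse_formula_for_Q2_general (M : ℕ) (hM : 2 ≤ M) (κ1 κ2 : ℝ)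
    (h1 : 0 < κ1) (h2 : 0 < κ1 + 4 * κ2) {n : Type*} [Fintype n] [DecidableEq n]
    (Q2 : Matrix (Fin M) n ℝ)
    (horth : Q2ᵀ * Q2 = 1) (hcompl : Q2 * Q2ᵀ = 1 - Matrix.vecMulVec (q1r M) (q1r M))
    (ξ : ℝ) (hξ : cexp (ξ * I) ≠ 1) :
    IsUnit ((Q2.map Complex.ofReal)ᵀ * Ahat M κ1 κ2 ξ * Q2.map Complex.ofReal) ∧
      ((Q2.map Complex.ofReal)ᵀ * Ahat M κ1 κ2 ξ * Q2.map Complex.ofReal)⁻¹ =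
        (Q2.map Complex.ofReal)ᵀ * (Ahat M κ1 κ2 ξ)⁻¹ * Q2.map Complex.ofReal -
          ((Q2.map Complex.ofReal)ᵀ * (Ahat M κ1 κ2 ξ)⁻¹ * q1col M) *
            ((q1col M)ᵀ * (Ahat M κ1 κ2 ξ)⁻¹ * q1col M)⁻¹ *
              ((q1col M)ᵀ * (Ahat M κ1 κ2 ξ)⁻¹ * Q2.map Complex.ofReal) := by
  have hq : (replicateCol (Fin 1) (q1r M))ᵀ * replicateCol (Fin 1) (q1r M) = 1 := by
    ext i j
    rw [Subsingleton.elim j i, one_apply_eq]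
    exact q1r_dotProduct_self (by lia)
  have hQq : Q2 * Q2ᵀ + replicateCol (Fin 1) (q1r M) * (replicateCol (Fin 1) (q1r M))ᵀ = 1 := by
    rw [hcompl, sub_add_eq_add_sub, sub_eq_iff_eq_add]
    congr 1
    ext i j
    simp only [mul_apply, Fin.sum_univ_one, transpose_apply, replicateCol_apply, vecMulVec_apply]
  exact posDef_isUnit_compression_and_inv_eq_of_real (posDef_Ahat hM h1 h2 hξ) horth hq hQq

theorem schur_inverse_formula_for_Q2 (M : ℕ) (hM : 5 ≤ M) (κ1 κ2 : ℝ)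
    (h1 : 0 < κ1) (h2 : 0 < κ1 + 4 * κ2)
    (Q2 : Matrix (Fin M) (Fin (M - 1)) ℝ)
    (horth : Q2ᵀ * Q2 = 1) (hcompl : Q2 * Q2ᵀ = 1 - Matrix.vecMulVec (q1r M) (q1r M))
    (ξ : ℝ) (hξ : ξ ∈ Set.Ioo 0 (2 * Real.pi)) :
    IsUnit ((Q2.map Complex.ofReal)ᵀ * Ahat M κ1 κ2 ξ * Q2.map Complex.ofReal) ∧
      ((Q2.map Complex.ofReal)ᵀ * Ahat M κ1 κ2 ξ * Q2.map Complex.ofReal)⁻¹ =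
        (Q2.map Complex.ofReal)ᵀ * (Ahat M κ1 κ2 ξ)⁻¹ * Q2.map Complex.ofReal -
          ((Q2.map Complex.ofReal)ᵀ * (Ahat M κ1 κ2 ξ)⁻¹ * q1col M) *
            ((q1col M)ᵀ * (Ahat M κ1 κ2 ξ)⁻¹ * q1col M)⁻¹ *
              ((q1col M)ᵀ * (Ahat M κ1 κ2 ξ)⁻¹ * Q2.map Complex.ofReal) :=
  schur_inverse_formula_for_Q2_general M (by lia) κ1 κ2 h1 h2 Q2 horth hcompl ξ
    (exp_mul_I_ne_one_of_mem_Ioo hξ)
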